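/- arXiv:2207.09340 — 2 statements merged into one kernel-verified Lean document; each statement's English description precedes it below -/
import Mathlib

section
/- Let U ∈ ℂ^{n×n} be a unitary matrix and let G : ℝ^k → ℝ^n be a (k,d,n)-generative ReLU network with layer widths k = k_0 ≤ k_1,…,k_d, k_d = n, whose final weight matrix W^{(d)} ∈ ℝ^{n×k_{d−1}} has i.i.d. standard Gaussian entries and whose other weight matrices are arbitrary and fixed. Then there is an absolute constant C > 0 such that for every γ ≥ 0, with probability at least 1 − 2·exp(−γ²) over W^{(d)}, the set range(G) − range(G) is α-coherent with respect to ‖·‖_U where α ≤ C·( √(k/n) + √(log(n)/n) + √( (k/n)·Σ_{i=1}^{d−1} log(2e·k_i/k) ) + γ/√n ). -/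
open MeasureTheory ProbabilityTheory
open scoped ENNReal Matrix

/-- The Euclidean (ℓ²) norm of a finite real vector. -/
noncomputable def l2R {n : ℕ} (x : Fin n → ℝ) : ℝ := Real.sqrt (∑ i, x i ^ 2)

/-- The ℓ^∞ norm of a finite complex vector. -/
noncomputable def linfC {n : ℕ} (x : Fin n → ℂ) : ℝ := ⨆ i, ‖x i‖

/-- The complexification of a real vector. -/
def toC {n : ℕ} (x : Fin n → ℝ) : Fin n → ℂ := fun i => (x i : ℂ)

/-- The measurement norm `‖x‖_U := ‖Ux‖_∞` of a real vector `x`. -/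
noncomputable def mNorm {n : ℕ} (U : Matrix (Fin n) (Fin n) ℂ) (x : Fin n → ℝ) : ℝ :=
  linfC (U.mulVec (toC x))

/-- `T` is `α`-coherent w.r.t. `‖·‖_U`: every `x ∈ T` with `‖x‖₂ = 1` has `‖x‖_U ≤ α`. -/
def Coherent {n : ℕ} (U : Matrix (Fin n) (Fin n) ℂ) (T : Set (Fin n → ℝ)) (α : ℝ) : Prop :=
  ∀ x ∈ T, l2R x = 1 → mNorm U x ≤ α

/-- The hidden layers of a ReLU network: `hid k W j z = σ(W^{(j)} ⋯ σ(W^{(1)} z))`. -/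
noncomputable def hid (k : ℕ → ℕ) (W : ∀ i : ℕ, Matrix (Fin (k (i + 1))) (Fin (k i)) ℝ) :
    (j : ℕ) → (Fin (k 0) → ℝ) → Fin (k j) → ℝ
  | 0, z => z
  | (j + 1), z => fun t => max (Matrix.mulVec (W j) (hid k W j z) t) 0

/-- The positivity patterns realised by `m` linear functionals on `ℝ^p`. -/
noncomputable def signPatterns {m p : ℕ} (A : Fin m → (Fin p → ℝ) →ₗ[ℝ] ℝ) :
    Finset (Finset (Fin m)) := by
  classical exact Finset.univ.filter fun S => ∃ z, ∀ t, t ∈ S ↔ 0 < A t z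

lemma mem_signPatterns {m p : ℕ} (A : Fin m → (Fin p → ℝ) →ₗ[ℝ] ℝ) (S : Finset (Fin m)) :
    S ∈ signPatterns A ↔ ∃ z, ∀ t, t ∈ S ↔ 0 < A t z := by
  simp [signPatterns]

lemma card_le_of_shatters_signPatterns {m p : ℕ} (A : Fin m → (Fin p → ℝ) →ₗ[ℝ] ℝ)
    {S : Finset (Fin m)} (hS : (signPatterns A).Shatters S) : S.card ≤ p := by
  by_contra! hlt
  have hdep : ¬ LinearIndependent ℝ (fun t : S => A t) := by
    intro hli
    have h1 := hli.fintype_card_le_finrank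
    simp at h1
    omega
  obtain ⟨c, hc, t₁, ht₁⟩ := Fintype.not_linearIndependent_iff.1 hdep
  wlog hpos : 0 < c t₁ generalizing c
  · refine this (fun t => -c t) (by simpa [Finset.sum_neg_distrib] using hc) (by simpa using ht₁) ?_
    have : c t₁ < 0 := lt_of_le_of_ne (not_lt.1 hpos) ht₁
    linarith
  obtain ⟨V, hV, hSV⟩ := hS (t := (Finset.univ.filter fun t : S => 0 < c t).map
    (Function.Embedding.subtype _)) (by
      intro x hx
      simp only [Finset.mem_map, Function.Embedding.coe_subtype] at hx
      obtain ⟨y, -, rfl⟩ := hx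
      exact y.2)
  obtain ⟨z, hz⟩ := (mem_signPatterns A V).1 hV
  have key : ∀ t : S, 0 < A t z ↔ 0 < c t := by
    intro t
    have := Finset.ext_iff.1 hSV t
    simpa [hz] using this
  have hsum : ∑ t : S, c t * A t z = 0 := by
    have := LinearMap.congr_fun hc z
    simpa using this
  have hnn : ∀ t ∈ (Finset.univ : Finset S), 0 ≤ c t * A t z := by
    intro t _
    by_cases h : 0 < c t
    · exact mul_nonneg h.le ((key t).2 h).le
    · exact mul_nonneg_of_nonpos_of_nonpos (not_lt.1 h) (not_lt.1 (mt (key t).1 h))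
  have hlt := Finset.sum_pos' hnn ⟨t₁, Finset.mem_univ _, mul_pos hpos ((key t₁).2 hpos)⟩
  exact hlt.ne' hsum

lemma sum_choose_le_pow {m p : ℕ} (hp : 0 < p) (hpm : p ≤ m) :
    (∑ j ∈ Finset.Iic p, (m.choose j : ℝ)) ≤ (Real.exp 1 * m / p) ^ p := by
  have hp' : (0 : ℝ) < p := by exact_mod_cast hp
  have hm' : (0 : ℝ) < m := by exact_mod_cast hp.trans_le hpm
  set x : ℝ := p / m with hx
  have hx0 : 0 < x := by positivity
  have hx1 : x ≤ 1 := (div_le_one hm').2 (by exact_mod_cast hpm)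
  have h1 : (∑ j ∈ Finset.Iic p, (m.choose j : ℝ)) * x ^ p ≤ Real.exp 1 ^ p := by
    calc (∑ j ∈ Finset.Iic p, (m.choose j : ℝ)) * x ^ p
        ≤ ∑ j ∈ Finset.Iic p, x ^ j * (m.choose j : ℝ) := by
          rw [Finset.sum_mul]
          refine Finset.sum_le_sum fun j hj => ?_
          rw [mul_comm]
          exact mul_le_mul_of_nonneg_right
            (pow_le_pow_of_le_one hx0.le hx1 (Finset.mem_Iic.1 hj)) (by positivity)
      _ ≤ ∑ j ∈ Finset.range (m + 1), x ^ j * (m.choose j : ℝ) := by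
          refine Finset.sum_le_sum_of_subset_of_nonneg ?_ fun _ _ _ => by positivity
          intro j hj
          have := Finset.mem_Iic.1 hj
          simp; omega
      _ = (x + 1) ^ m := by rw [add_pow]; simp
      _ ≤ Real.exp x ^ m := by gcongr; exact Real.add_one_le_exp x
      _ = Real.exp 1 ^ p := by
          rw [← Real.exp_nat_mul, ← Real.exp_nat_mul, hx]
          congr 1; field_simp
  have h2 : (Real.exp 1 * m / p) ^ p = Real.exp 1 ^ p / x ^ p := by
    rw [← div_pow, hx]; congr 1; field_simp
  rw [h2, le_div_iff₀ (by positivity)]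
  exact h1

lemma card_signPatterns_le {m p : ℕ} (hp : 0 < p) (hpm : p ≤ m)
    (A : Fin m → (Fin p → ℝ) →ₗ[ℝ] ℝ) :
    ((signPatterns A).card : ℝ) ≤ (Real.exp 1 * m / p) ^ p := by
  refine le_trans ?_ (sum_choose_le_pow hp hpm)
  have hvc : (signPatterns A).vcDim ≤ p :=
    Finset.sup_le fun S hS => card_le_of_shatters_signPatterns A (Finset.mem_shatterer.1 hS)
  have h := ((signPatterns A).card_le_card_shatterer.trans
    Finset.card_shatterer_le_sum_vcDim).trans
      (Finset.sum_le_sum_of_subset (Finset.Iic_subset_Iic.2 hvc))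
  rw [Fintype.card_fin] at h
  exact_mod_cast h

/-- A ReLU network coincides at every input with one of at most `∏ (2e k_i / k)^k` linear maps. -/
lemma exists_finset_linearMap_hid (k : ℕ → ℕ)
    (W : ∀ i : ℕ, Matrix (Fin (k (i + 1))) (Fin (k i)) ℝ) (h0 : 0 < k 0) (j : ℕ)
    (hmono : ∀ i, i ≤ j → k 0 ≤ k i) :
    ∃ F : Finset ((Fin (k 0) → ℝ) →ₗ[ℝ] (Fin (k j) → ℝ)),
      (F.card : ℝ) ≤ ∏ i ∈ Finset.range j, (2 * Real.exp 1 * k (i + 1) / k 0) ^ k 0 ∧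
      ∀ z, ∃ L ∈ F, hid k W j z = L z := by
  classical
  induction j with
  | zero => exact ⟨{LinearMap.id}, by simp, fun z => ⟨LinearMap.id, by simp, rfl⟩⟩
  | succ j ih =>
    obtain ⟨F, hcard, hF⟩ := ih fun i hi => hmono i (by omega)
    let A : ((Fin (k 0) → ℝ) →ₗ[ℝ] (Fin (k j) → ℝ)) → Fin (k (j + 1)) →
        (Fin (k 0) → ℝ) →ₗ[ℝ] ℝ := fun L t => LinearMap.proj t ∘ₗ (W j).mulVecLin ∘ₗ L
    let M : ((Fin (k 0) → ℝ) →ₗ[ℝ] (Fin (k j) → ℝ)) → Finset (Fin (k (j + 1))) →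
        (Fin (k 0) → ℝ) →ₗ[ℝ] (Fin (k (j + 1)) → ℝ) :=
      fun L S => LinearMap.pi fun t => if t ∈ S then A L t else 0
    refine ⟨F.biUnion fun L => (signPatterns (A L)).image (M L), ?_, fun z => ?_⟩
    · set b : ℝ := (2 * Real.exp 1 * k (j + 1) / k 0) ^ k 0 with hb
      have hstep : ∀ L ∈ F, (((signPatterns (A L)).image (M L)).card : ℝ) ≤ b := by
        intro L _
        refine (Nat.cast_le.2 Finset.card_image_le).trans
          ((card_signPatterns_le h0 (hmono (j + 1) le_rfl) (A L)).trans ?_)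
        rw [hb]
        gcongr
        have := Real.exp_pos 1
        linarith
      calc (((F.biUnion fun L => (signPatterns (A L)).image (M L)).card : ℕ) : ℝ)
          ≤ ∑ L ∈ F, (((signPatterns (A L)).image (M L)).card : ℝ) := by
            exact_mod_cast Finset.card_biUnion_le
        _ ≤ ∑ L ∈ F, b := Finset.sum_le_sum hstep
        _ = F.card * b := by simp
        _ ≤ _ := by
            rw [Finset.prod_range_succ]
            gcongr
    · obtain ⟨L, hL, hz⟩ := hF z
      let S : Finset (Fin (k (j + 1))) := Finset.univ.filter fun t => 0 < A L t z
      refine ⟨M L S, Finset.mem_biUnion.2 ⟨L, hL, Finset.mem_image_of_mem _ ?_⟩, ?_⟩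
      · exact (mem_signPatterns _ _).2 ⟨z, fun t => by simp [S]⟩
      · funext t
        have hA : Matrix.mulVec (W j) (hid k W j z) t = A L t z := by
          simp [A, hz]
        simp only [hid, hA, M, LinearMap.pi_apply]
        by_cases h : 0 < A L t z
        · simp [S, h, h.le]
        · simp [S, h, not_lt.1 h]

lemma integrable_exp_neg_mul_sq_gaussianReal {c : ℝ} (hc : 0 < 1 + 2 * c) :
    Integrable (fun x : ℝ => Real.exp (-c * x ^ 2)) (gaussianReal 0 1) := by
  rw [gaussianReal_of_var_ne_zero _ one_ne_zero,
    integrable_withDensity_iff_integrable_smul' (by fun_prop)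
      (ae_of_all _ fun _ => gaussianPDF_lt_top)]
  have h : (fun x : ℝ => (gaussianPDF 0 1 x).toReal • Real.exp (-c * x ^ 2)) =
      fun x => (√(2 * Real.pi))⁻¹ * Real.exp (-(1 / 2 + c) * x ^ 2) := by
    funext x
    simp only [gaussianPDF, gaussianPDFReal, smul_eq_mul]
    rw [ENNReal.toReal_ofReal (by positivity), mul_assoc, ← Real.exp_add]
    simp
    left; ring
  rw [h]
  exact (integrable_exp_neg_mul_sq (by linarith)).const_mul _

lemma integral_exp_neg_mul_sq_gaussianReal {c : ℝ} (hc : 0 < 1 + 2 * c) :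
    ∫ x, Real.exp (-c * x ^ 2) ∂(gaussianReal 0 1) = (√(1 + 2 * c))⁻¹ := by
  rw [integral_gaussianReal_eq_integral_smul one_ne_zero]
  have h : (fun x : ℝ => gaussianPDFReal 0 1 x • Real.exp (-c * x ^ 2)) =
      fun x => (√(2 * Real.pi))⁻¹ * Real.exp (-(1 / 2 + c) * x ^ 2) := by
    funext x
    simp only [gaussianPDFReal, smul_eq_mul]
    rw [mul_assoc, ← Real.exp_add]
    simp
    left; ring
  rw [h, integral_const_mul, integral_gaussian, ← Real.sqrt_inv, ← Real.sqrt_inv,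
    ← Real.sqrt_mul (by positivity)]
  congr 1
  have := Real.pi_pos
  field_simp

lemma inv_sqrt_le_exp_neg {s : ℝ} (hs : 0 ≤ s) (hs1 : s ≤ 1) :
    (√(1 + 2 * (s ^ 2 / 4)))⁻¹ ≤ Real.exp (-(s ^ 2 / 8)) := by
  rw [Real.exp_neg]
  refine inv_anti₀ (Real.exp_pos _) (Real.le_sqrt_of_sq_le ?_)
  rw [← Real.exp_nat_mul]
  have h := Real.add_one_le_exp (-(s ^ 2 / 4))
  have hss : s ^ 2 ≤ 1 := by nlinarith
  have h2 : Real.exp (-(s ^ 2 / 4)) * Real.exp (s ^ 2 / 4) = 1 := by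
    rw [← Real.exp_add]; simp
  have h3 : ((2 : ℕ) : ℝ) * (s ^ 2 / 8) = s ^ 2 / 4 := by push_cast; ring
  rw [h3]
  have hE := Real.exp_pos (s ^ 2 / 4)
  have h4 : (1 - s ^ 2 / 4) * Real.exp (s ^ 2 / 4) ≤ 1 := by nlinarith
  have h5 : (1 : ℝ) ≤ (1 - s ^ 2 / 4) * (1 + s ^ 2 / 2) := by nlinarith [sq_nonneg s]
  have h6 : 0 < 1 - s ^ 2 / 4 := by linarith
  have : (1 - s ^ 2 / 4) * Real.exp (s ^ 2 / 4) ≤ (1 - s ^ 2 / 4) * (1 + s ^ 2 / 2) := by linarith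
  have := le_of_mul_le_mul_left this h6
  linarith

lemma inv_sqrt_le_exp_half {s : ℝ} :
    (√(1 + 2 * (s ^ 2 / 4 - 1 / 4)))⁻¹ ≤ Real.exp (1 / 2) := by
  rw [inv_le_comm₀ (Real.sqrt_pos.2 (by nlinarith [sq_nonneg s])) (Real.exp_pos _)]
  refine Real.le_sqrt_of_sq_le ?_
  rw [← Real.exp_neg, ← Real.exp_nat_mul]
  have h : ((2 : ℕ) : ℝ) * -(1 / 2) = -1 := by norm_num
  rw [h, Real.exp_neg]
  have : (2 : ℝ) ≤ Real.exp 1 := by have := Real.add_one_le_exp (1 : ℝ); linarith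
  have h2 : (Real.exp 1)⁻¹ ≤ 2⁻¹ := inv_anti₀ (by norm_num) this
  nlinarith [sq_nonneg s]

/-- A standard Gaussian vector is unlikely to have a large correlation with a subspace of
small dimension. -/
lemma stdGaussian_correlation_le {E : Type*} [NormedAddCommGroup E] [InnerProductSpace ℝ E]
    [FiniteDimensional ℝ E] [MeasurableSpace E] [BorelSpace E] (V : Submodule ℝ E) {p : ℕ}
    {s : ℝ} (hs : 0 ≤ s) (hV : Module.finrank ℝ V ≤ p)
    (hp : s < 1 → 2 * p ≤ Module.finrank ℝ E) :
    stdGaussian E {g | ∃ v ∈ V, s * ‖v‖ * ‖g‖ < inner ℝ g v} ≤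
      ENNReal.ofReal (Real.exp (p / 2 - s ^ 2 * Module.finrank ℝ E / 16)) := by
  classical
  rcases le_or_gt 1 s with hs1 | hs1
  · rw [show {g : E | ∃ v ∈ V, s * ‖v‖ * ‖g‖ < inner ℝ g v} = ∅ from ?_, measure_empty]
    · exact zero_le
    refine Set.eq_empty_of_forall_notMem ?_
    rintro g ⟨v, -, hlt⟩
    refine hlt.not_ge ?_
    refine (real_inner_le_norm g v).trans ?_
    nlinarith [mul_nonneg (norm_nonneg g) (norm_nonneg v)]
  set r := Module.finrank ℝ V with hr
  set n := Module.finrank ℝ E with hn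
  have hrn : r ≤ n := Submodule.finrank_le V
  let e : Fin r ⊕ Fin (n - r) → E := Sum.elim (fun i => (stdOrthonormalBasis ℝ V i : E)) 0
  have he : Orthonormal ℝ ((Set.range Sum.inl).domRestrict e) := by
    have h1 : Orthonormal ℝ (fun i => (stdOrthonormalBasis ℝ V i : E)) :=
      (stdOrthonormalBasis ℝ V).orthonormal.comp_linearIsometry V.subtypeₗᵢ
    have h2 := h1.comp (fun x : Set.range (Sum.inl : Fin r → Fin r ⊕ Fin (n - r)) => x.2.choose) (by
      intro x y hxy
      apply Subtype.ext
      rw [← x.2.choose_spec, ← y.2.choose_spec]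
      exact congrArg _ hxy)
    convert! h2 using 1
    funext x
    obtain ⟨x, hx⟩ := x
    simp only [Set.domRestrict_apply, Function.comp]
    conv_lhs => rw [← hx.choose_spec]
    simp [e]
  obtain ⟨b, hb⟩ := he.exists_orthonormalBasis_extension_of_card_eq
    (by simp only [Fintype.card_sum, Fintype.card_fin]; omega)
  have hbl : ∀ i : Fin r, b (Sum.inl i) = stdOrthonormalBasis ℝ V i := fun i => by
    rw [hb _ ⟨i, rfl⟩]; simp [e]
  have hbr : ∀ (i : Fin (n - r)), ∀ v ∈ V, inner ℝ (b (Sum.inr i)) v = 0 := by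
    intro i v hv
    have : (⟨v, hv⟩ : V) = ∑ j, (stdOrthonormalBasis ℝ V).repr ⟨v, hv⟩ j •
      stdOrthonormalBasis ℝ V j := ((stdOrthonormalBasis ℝ V).sum_repr _).symm
    have hv' : v = ∑ j, (stdOrthonormalBasis ℝ V).repr ⟨v, hv⟩ j • b (Sum.inl j) := by
      simpa [hbl] using congrArg (V.subtype) this
    rw [hv', inner_sum]
    refine Finset.sum_eq_zero fun j _ => ?_
    rw [inner_smul_right, b.orthonormal.2 (by simp), mul_zero]
  let c : Fin r ⊕ Fin (n - r) → ℝ := Sum.elim (fun _ => s ^ 2 / 4 - 1 / 4) (fun _ => s ^ 2 / 4)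
  have hc : ∀ i, 0 < 1 + 2 * c i := by
    rintro (i | i) <;> simp only [c, Sum.elim_inl, Sum.elim_inr] <;> nlinarith [sq_nonneg s]
  have hev : MeasurableSet {g : E | ∃ v ∈ V, s * ‖v‖ * ‖g‖ < inner ℝ g v} := by
    have : {g : E | ∃ v ∈ V, s * ‖v‖ * ‖g‖ < inner ℝ g v} =
        ⋃ v ∈ V, {g : E | s * ‖v‖ * ‖g‖ < inner ℝ g v} := by
      ext; simp
    rw [this]
    exact (isOpen_biUnion fun v _ => isOpen_lt (by fun_prop) (by fun_prop)).measurableSet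
  rw [stdGaussian_eq_map_pi_orthonormalBasis b, Measure.map_apply (by fun_prop) hev]
  set ν : Measure (Fin r ⊕ Fin (n - r) → ℝ) := Measure.pi fun _ => gaussianReal 0 1
  have hsub : (fun x : Fin r ⊕ Fin (n - r) → ℝ => ∑ i, x i • b i) ⁻¹'
      {g : E | ∃ v ∈ V, s * ‖v‖ * ‖g‖ < inner ℝ g v} ⊆
      {x | 1 ≤ ∏ i, Real.exp (-c i * x i ^ 2)} := by
    rintro x ⟨v, hv, hlt⟩
    set g := ∑ i, x i • b i with hg
    have hgn : ‖g‖ ^ 2 = ∑ i, x i ^ 2 := by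
      rw [← b.sum_sq_inner_left]
      refine Finset.sum_congr rfl fun i _ => ?_
      rw [hg, b.orthonormal.inner_left_fintype]
      simp
    have hvn : ‖v‖ ^ 2 = ∑ i : Fin r, inner ℝ (b (Sum.inl i)) v ^ 2 := by
      rw [← b.sum_sq_inner_right, Fintype.sum_sum_type]
      simp [hbr _ v hv]
    have hgv : inner ℝ g v = ∑ i : Fin r, x (Sum.inl i) * inner ℝ (b (Sum.inl i)) v := by
      rw [hg, sum_inner, Fintype.sum_sum_type]
      simp [inner_smul_left, hbr _ v hv]
    have hcs : inner ℝ g v ^ 2 ≤ (∑ i : Fin r, x (Sum.inl i) ^ 2) * ‖v‖ ^ 2 := by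
      rw [hgv, hvn]; exact Finset.sum_mul_sq_le_sq_mul_sq _ _ _
    have h1 : (s * ‖v‖ * ‖g‖) ^ 2 < inner ℝ g v ^ 2 :=
      pow_lt_pow_left₀ hlt (by positivity) two_ne_zero
    have hvpos : 0 < ‖v‖ ^ 2 := by
      by_contra! h
      have : ‖v‖ ^ 2 = 0 := le_antisymm h (sq_nonneg _)
      rw [this] at hcs
      nlinarith [sq_nonneg (s * ‖v‖ * ‖g‖)]
    have h2 : s ^ 2 * ‖g‖ ^ 2 ≤ ∑ i : Fin r, x (Sum.inl i) ^ 2 := by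
      refine le_of_mul_le_mul_right ?_ hvpos
      nlinarith
    rw [Set.mem_ofPred_eq, ← Real.exp_sum]
    refine Real.one_le_exp ?_
    rw [hgn, Fintype.sum_sum_type] at h2
    rw [Fintype.sum_sum_type]
    simp only [c, Sum.elim_inl, Sum.elim_inr, ← Finset.mul_sum]
    nlinarith
  have hint : Integrable (fun x => ∏ i, Real.exp (-c i * x i ^ 2)) ν :=
    Integrable.fintype_prod (f := fun i y => Real.exp (-c i * y ^ 2))
      fun i => integrable_exp_neg_mul_sq_gaussianReal (hc i)
  have hmk := mul_meas_ge_le_integral_of_nonneg (μ := ν)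
    (f := fun x => ∏ i, Real.exp (-c i * x i ^ 2))
    (ae_of_all _ fun x => Finset.prod_nonneg fun i _ => (Real.exp_pos _).le) hint 1
  rw [one_mul, integral_fintype_prod_eq_prod (f := fun i y => Real.exp (-c i * y ^ 2))] at hmk
  refine (measure_mono hsub).trans ?_
  rw [← ofReal_measureReal]
  refine ENNReal.ofReal_le_ofReal (hmk.trans ?_)
  simp only [integral_exp_neg_mul_sq_gaussianReal (hc _), Fintype.prod_sum_type, c,
    Sum.elim_inl, Sum.elim_inr, Finset.prod_const, Finset.card_univ, Fintype.card_fin]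
  calc _ ≤ Real.exp (1 / 2) ^ r * Real.exp (-(s ^ 2 / 8)) ^ (n - r) := by
        gcongr
        · exact inv_sqrt_le_exp_half
        · exact inv_sqrt_le_exp_neg hs hs1.le
    _ = Real.exp (r * (1 / 2) + (n - r : ℕ) * (-(s ^ 2 / 8))) := by
        rw [Real.exp_add, Real.exp_nat_mul, Real.exp_nat_mul]
    _ ≤ _ := by
        refine Real.exp_le_exp.2 ?_
        rw [Nat.cast_sub hrn]
        have h1 : (r : ℝ) ≤ p := by exact_mod_cast hV
        have h2 : (2 * p : ℝ) ≤ n := by exact_mod_cast hp hs1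
        nlinarith [sq_nonneg s]

section Rotation

variable {E : Type*} [NormedAddCommGroup E] [InnerProductSpace ℝ E] {ι : Type*} [Fintype ι]

/-- The tuples `Y` of columns for which some `∑ j, u j • Y j` with `u ∈ T` has a normalised
correlation with `a` exceeding `s`. -/
def correlatedSet (T : Submodule ℝ (ι → ℝ)) (s : ℝ) (a : E) : Set (PiLp 2 fun _ : ι => E) :=
  {Y | ∃ u ∈ T, s * ‖∑ j, u j • Y j‖ * ‖a‖ < inner ℝ a (∑ j, u j • Y j)}

lemma isOpen_correlatedSet_prod (T : Submodule ℝ (ι → ℝ)) (s : ℝ) :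
    IsOpen {q : (PiLp 2 fun _ : ι => E) × E | q.1 ∈ correlatedSet T s q.2} := by
  have : {q : (PiLp 2 fun _ : ι => E) × E | q.1 ∈ correlatedSet T s q.2} =
      ⋃ u ∈ T, {q | s * ‖∑ j, u j • q.1 j‖ * ‖q.2‖ < inner ℝ q.2 (∑ j, u j • q.1 j)} := by
    ext; simp [correlatedSet]
  rw [this]
  exact isOpen_biUnion fun u _ => isOpen_lt (by fun_prop) (by fun_prop)

lemma isOpen_correlatedSet (T : Submodule ℝ (ι → ℝ)) (s : ℝ) (a : E) :
    IsOpen (correlatedSet T s a) :=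
  (isOpen_correlatedSet_prod T s).preimage (f := fun Y => (Y, a)) (by fun_prop)

lemma correlatedSet_smul (T : Submodule ℝ (ι → ℝ)) (s : ℝ) (a : E) {c : ℝ} (hc : 0 < c) :
    correlatedSet T s (c • a) = correlatedSet T s a := by
  ext Y
  simp only [correlatedSet, Set.mem_ofPred_eq]
  refine exists_congr fun u => and_congr_right fun _ => ?_
  rw [norm_smul, inner_smul_left, Real.norm_of_nonneg hc.le]
  simp only [conj_trivial]
  rw [mul_left_comm, mul_lt_mul_iff_right₀ hc]

variable [FiniteDimensional ℝ E] [MeasurableSpace E] [BorelSpace E]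

lemma stdGaussian_correlatedSet_isometry (T : Submodule ℝ (ι → ℝ)) (s : ℝ) (a : E)
    (R : E ≃ₗᵢ[ℝ] E) :
    stdGaussian (PiLp 2 fun _ : ι => E) (correlatedSet T s (R a)) =
      stdGaussian (PiLp 2 fun _ : ι => E) (correlatedSet T s a) := by
  let Q := LinearIsometryEquiv.piLpCongrRight 2 fun _ : ι => R
  conv_lhs => rw [← stdGaussian_map Q, Measure.map_apply Q.continuous.measurable
    (isOpen_correlatedSet T s _).measurableSet]
  congr 1
  ext Y
  have h : ∀ u : ι → ℝ, ∑ j, u j • Q Y j = R (∑ j, u j • Y j) := by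
    intro u; simp [Q]
  simp only [correlatedSet, Set.mem_preimage, Set.mem_ofPred_eq, h,
    LinearIsometryEquiv.norm_map, LinearIsometryEquiv.inner_map_map]

lemma stdGaussian_correlatedSet_eq (T : Submodule ℝ (ι → ℝ)) (s : ℝ) {a b : E}
    (ha : a ≠ 0) (hb : b ≠ 0) :
    stdGaussian (PiLp 2 fun _ : ι => E) (correlatedSet T s a) =
      stdGaussian (PiLp 2 fun _ : ι => E) (correlatedSet T s b) := by
  have ha' := norm_pos_iff.2 ha
  have hb' := norm_pos_iff.2 hb
  have hc : 0 < ‖b‖ / ‖a‖ := by positivity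
  have hn : ‖(‖b‖ / ‖a‖) • a‖ = ‖b‖ := by
    rw [norm_smul, Real.norm_of_nonneg hc.le]; field_simp
  rw [← correlatedSet_smul T s a hc,
    ← stdGaussian_correlatedSet_isometry T s _ (ℝ ∙ ((‖b‖ / ‖a‖) • a - b))ᗮ.reflection,
    Submodule.reflection_sub hn]

lemma stdGaussian_singleton_zero [Nontrivial E] : stdGaussian E {0} = 0 := by
  have : Nonempty (Fin (Module.finrank ℝ E)) := Fin.pos_iff_nonempty.1 Module.finrank_pos
  let b := stdOrthonormalBasis ℝ E
  have : NullSingletonClass (gaussianReal 0 1) := nullSingletonClass_gaussianReal one_ne_zero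
  rw [stdGaussian_eq_map_pi_orthonormalBasis b,
    Measure.map_apply (by fun_prop) (measurableSet_singleton 0)]
  have h : (fun x : Fin (Module.finrank ℝ E) → ℝ => ∑ i, x i • b i) ⁻¹' {0} = {0} := by
    ext x
    simp only [Set.mem_preimage, Set.mem_singleton_iff]
    refine ⟨fun hx => ?_, fun hx => by simp [hx]⟩
    funext i
    exact Fintype.linearIndependent_iff.1 b.orthonormal.linearIndependent x hx i
  rw [h, Measure.pi_singleton]
  simp [Module.finrank_pos.ne']

/-- The random subspace spanned by Gaussian columns is unlikely to be strongly correlated with a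
fixed vector. -/
lemma stdGaussian_correlatedSet_le (T : Submodule ℝ (ι → ℝ)) {s : ℝ} (hs : 0 ≤ s) (a : E)
    {p : ℕ} (hT : Module.finrank ℝ T ≤ p) (hp : s < 1 → 2 * p ≤ Module.finrank ℝ E) :
    stdGaussian (PiLp 2 fun _ : ι => E) (correlatedSet T s a) ≤
      ENNReal.ofReal (Real.exp (p / 2 - s ^ 2 * Module.finrank ℝ E / 16)) := by
  by_cases ha : a = 0
  · rw [show correlatedSet T s a = ∅ by ext Y; simp [correlatedSet, ha], measure_empty]
    exact zero_le
  have : Nontrivial E := ⟨a, 0, ha⟩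
  set P := stdGaussian (PiLp 2 fun _ : ι => E)
  have hmeas := (isOpen_correlatedSet_prod (E := E) T s).measurableSet
  calc P (correlatedSet T s a) = ∫⁻ _ : E, P (correlatedSet T s a) ∂(stdGaussian E) := by simp
    _ = ∫⁻ g : E, P (correlatedSet T s g) ∂(stdGaussian E) := by
        refine lintegral_congr_ae ?_
        have h0 : ∀ᵐ g ∂(stdGaussian E), g ≠ 0 :=
          compl_mem_ae_iff.2 stdGaussian_singleton_zero
        filter_upwards [h0] with g hg
        exact stdGaussian_correlatedSet_eq T s ha hg
    _ = (P.prod (stdGaussian E)) {q | q.1 ∈ correlatedSet T s q.2} :=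
        (Measure.prod_apply_symm hmeas).symm
    _ = ∫⁻ Y, stdGaussian E {g | Y ∈ correlatedSet T s g} ∂P := Measure.prod_apply hmeas
    _ ≤ ∫⁻ _, ENNReal.ofReal (Real.exp (p / 2 - s ^ 2 * Module.finrank ℝ E / 16)) ∂P := by
        refine lintegral_mono fun Y => ?_
        let Φ : (ι → ℝ) →ₗ[ℝ] E := Fintype.linearCombination ℝ Y
        refine le_trans (measure_mono ?_) (stdGaussian_correlation_le (T.map Φ) hs
          ((Submodule.finrank_map_le Φ T).trans hT) hp)
        rintro g ⟨u, hu, hlt⟩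
        exact ⟨Φ u, Submodule.mem_map_of_mem hu, hlt⟩
    _ = _ := by simp

end Rotation

/-- The columns of a matrix given by its entries. -/
def columns {n m : ℕ} (w : Fin n × Fin m → ℝ) :
    PiLp 2 fun _ : Fin m => EuclideanSpace ℝ (Fin n) :=
  WithLp.toLp 2 fun j => WithLp.toLp 2 fun i => w (i, j)

lemma measurable_columns {n m : ℕ} : Measurable (columns (n := n) (m := m)) := by
  unfold columns; fun_prop

/-- The columns of a Gaussian matrix form a standard Gaussian vector. -/
lemma map_columns_pi_gaussianReal (n m : ℕ) :
    (Measure.pi fun _ : Fin n × Fin m => gaussianReal 0 1).map columns =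
      stdGaussian (PiLp 2 fun _ : Fin m => EuclideanSpace ℝ (Fin n)) := by
  let e : Fin n × Fin m ≃ (Σ _ : Fin m, Fin n) :=
    (Equiv.prodComm _ _).trans (Equiv.sigmaEquivProd _ _).symm
  let Q : EuclideanSpace ℝ (Fin n × Fin m) ≃ₗᵢ[ℝ]
      (PiLp 2 fun _ : Fin m => EuclideanSpace ℝ (Fin n)) :=
    (LinearIsometryEquiv.piLpCongrLeft 2 ℝ ℝ e).trans
      (LinearIsometryEquiv.piLpCurry ℝ 2 fun (_ : Fin m) (_ : Fin n) => ℝ)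
  have h : columns (n := n) (m := m) = Q ∘ WithLp.toLp 2 := by
    rfl
  rw [h, ← Measure.map_map Q.continuous.measurable (by fun_prop), map_pi_eq_stdGaussian,
    stdGaussian_map Q]

/-- The real (`true`) or imaginary (`false`) part of a row of a complex matrix. -/
def rowPart {n : ℕ} (U : Matrix (Fin n) (Fin n) ℂ) (q : Fin n × Bool) :
    EuclideanSpace ℝ (Fin n) :=
  WithLp.toLp 2 fun j => if q.2 then (U q.1 j).re else (U q.1 j).im

lemma norm_rowPart_le {n : ℕ} {U : Matrix (Fin n) (Fin n) ℂ} (hU : Uᴴ * U = 1)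
    (q : Fin n × Bool) : ‖rowPart U q‖ ≤ 1 := by
  have h1 : ∑ j, Complex.normSq (U q.1 j) = 1 := by
    have hU' : U * Uᴴ = 1 := mul_eq_one_comm.1 hU
    have h := congrFun (congrFun hU' q.1) q.1
    simp only [Matrix.mul_apply, Matrix.conjTranspose_apply, Matrix.one_apply_eq] at h
    have h2 : ∀ j, U q.1 j * star (U q.1 j) = (Complex.normSq (U q.1 j) : ℂ) :=
      fun j => Complex.mul_conj _
    simp only [h2] at h
    exact_mod_cast h
  refine (sq_le_one_iff₀ (norm_nonneg _)).1 ?_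
  rw [EuclideanSpace.real_norm_sq_eq, ← h1]
  refine Finset.sum_le_sum fun j _ => ?_
  rw [Complex.normSq_apply, rowPart]
  rcases q.2 <;> simp <;> nlinarith [sq_nonneg (U q.1 j).re, sq_nonneg (U q.1 j).im]

lemma sum_smul_columns {n m : ℕ} (M : Matrix (Fin n) (Fin m) ℝ) (u : Fin m → ℝ) :
    ∑ j, u j • columns (fun q : Fin n × Fin m => M q.1 q.2) j = WithLp.toLp 2 (M.mulVec u) := by
  ext i
  simp [columns, Matrix.mulVec, dotProduct, mul_comm]

lemma mulVec_toC_eq {n : ℕ} (U : Matrix (Fin n) (Fin n) ℂ) (x : Fin n → ℝ) (i : Fin n) :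
    U.mulVec (toC x) i = (inner ℝ (rowPart U (i, true)) (WithLp.toLp 2 x) : ℝ) +
      (inner ℝ (rowPart U (i, false)) (WithLp.toLp 2 x) : ℝ) * Complex.I := by
  apply Complex.ext <;>
  simp [Matrix.mulVec, dotProduct, toC, rowPart, PiLp.inner_apply, mul_comm]

lemma mNorm_mulVec_le {n m : ℕ} {U : Matrix (Fin n) (Fin n) ℂ} (hU : Uᴴ * U = 1)
    (M : Matrix (Fin n) (Fin m) ℝ) (T : Submodule ℝ (Fin m → ℝ)) {s : ℝ} (hs : 0 ≤ s)
    (h : ∀ q, columns (fun q : Fin n × Fin m => M q.1 q.2) ∉ correlatedSet T s (rowPart U q))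
    {v : Fin m → ℝ} (hv : v ∈ T) (hx : l2R (M.mulVec v) = 1) :
    mNorm U (M.mulVec v) ≤ 2 * s := by
  set x := WithLp.toLp 2 (M.mulVec v) with hxdef
  have hxn : ‖x‖ = 1 := by
    rw [EuclideanSpace.norm_eq]; simpa [l2R] using hx
  have hle : ∀ q, ∀ u ∈ T, ‖WithLp.toLp 2 (M.mulVec u)‖ = 1 →
      inner ℝ (rowPart U q) (WithLp.toLp 2 (M.mulVec u)) ≤ s := by
    intro q u hu hn
    have h1 := h q
    simp only [correlatedSet, Set.mem_ofPred_eq, not_exists, not_and, not_lt,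
      sum_smul_columns] at h1
    have h2 := h1 u hu
    rw [hn, mul_one] at h2
    exact h2.trans (mul_le_of_le_one_right hs (norm_rowPart_le hU q))
  have habs : ∀ q, |inner ℝ (rowPart U q) x| ≤ s := by
    intro q
    refine abs_le.2 ⟨?_, hle q v hv hxn⟩
    have hneg : WithLp.toLp 2 (M.mulVec (-v)) = -x := by
      rw [Matrix.mulVec_neg, WithLp.toLp_neg]
    have := hle q (-v) (T.neg_mem hv) (by rw [hneg, norm_neg, hxn])
    rw [hneg, inner_neg_right] at this
    linarith
  refine Real.iSup_le (fun i => ?_) (by positivity)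
  rw [mulVec_toC_eq]
  refine (norm_add_le _ _).trans ?_
  rw [norm_mul, Complex.norm_I, mul_one, Complex.norm_real, Complex.norm_real]
  have h1 := habs (i, true)
  have h2 := habs (i, false)
  simp only [Real.norm_eq_abs]
  linarith

lemma sqrt_sum_le_sum_sqrt {a b c e : ℝ} (ha : 0 ≤ a) (hb : 0 ≤ b) (hc : 0 ≤ c) (he : 0 ≤ e) :
    4 * √(a + b + 2 * c + e ^ 2) ≤ 8 * (√a + √b + √c + e) := by
  have h : √(a + b + 2 * c + e ^ 2) ≤ 2 * (√a + √b + √c + e) := by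
    refine Real.sqrt_le_iff.2 ⟨by positivity, ?_⟩
    have h1 := Real.sq_sqrt ha
    have h2 := Real.sq_sqrt hb
    have h3 := Real.sq_sqrt hc
    have ha' := Real.sqrt_nonneg a
    have hb' := Real.sqrt_nonneg b
    have hc' := Real.sqrt_nonneg c
    nlinarith [mul_nonneg ha' hb', mul_nonneg ha' hc', mul_nonneg ha' he, mul_nonneg hb' hc',
      mul_nonneg hb' he, mul_nonneg hc' he]
  linarith

/-- Union bound over finitely many subspaces and the parts of all rows. -/
lemma stdGaussian_biUnion_correlatedSet_le {n m p : ℕ} (U : Matrix (Fin n) (Fin n) ℂ)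
    (F : Finset (Submodule ℝ (Fin m → ℝ))) {s : ℝ} (hs : 0 ≤ s)
    (hF : ∀ T ∈ F, Module.finrank ℝ T ≤ p) (hp : s < 1 → 2 * p ≤ n) :
    stdGaussian (PiLp 2 fun _ : Fin m => EuclideanSpace ℝ (Fin n))
      (⋃ r ∈ F ×ˢ (Finset.univ : Finset (Fin n × Bool)), correlatedSet r.1 s (rowPart U r.2)) ≤
      ENNReal.ofReal (F.card * (n * 2) * Real.exp (p / 2 - s ^ 2 * n / 16)) := by
  have hstep : ∀ r ∈ F ×ˢ (Finset.univ : Finset (Fin n × Bool)),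
      stdGaussian (PiLp 2 fun _ : Fin m => EuclideanSpace ℝ (Fin n))
        (correlatedSet r.1 s (rowPart U r.2)) ≤
      ENNReal.ofReal (Real.exp (p / 2 - s ^ 2 * n / 16)) := by
    intro r hr
    have h := stdGaussian_correlatedSet_le r.1 hs (rowPart U r.2)
      (hF r.1 (Finset.mem_product.1 hr).1) (by rwa [finrank_euclideanSpace_fin])
    rwa [finrank_euclideanSpace_fin] at h
  refine (measure_biUnion_finset_le _ _).trans ((Finset.sum_le_sum hstep).trans_eq ?_)
  rw [Finset.sum_const, nsmul_eq_mul, ← ENNReal.ofReal_natCast,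
    ← ENNReal.ofReal_mul (by positivity)]
  congr 2
  simp [Finset.card_product]

/-- typical coherence of a generative network with Gaussian final
layer: there is an absolute constant `C > 0` such that for a unitary `U` and a
`(k, d, n)`-generative ReLU network `G` (here of depth `d+1`, input width `k = k 0`,
hidden widths `k 1, …, k d` each at least `k 0`, output width `n = k (d+1)`), whose
final weight matrix `Wd` has i.i.d. `N(0,1)` entries and whose other weights are
arbitrary and fixed: for every `γ ≥ 0`, with probability at least `1 − 2·exp(−γ²)`
over `Wd`, the set `range(G) − range(G)` is `α`-coherent w.r.t. `‖·‖_U` with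
`α = C·(√(k/n) + √(log(n)/n) + √((k/n)·Σ_{i=1}^{d} log(2e·k_i/k)) + γ/√n)`. -/
theorem typical_coherence_generative_network :
    ∃ C : ℝ, 0 < C ∧
      ∀ (d : ℕ) (k : ℕ → ℕ) (W : ∀ i : ℕ, Matrix (Fin (k (i + 1))) (Fin (k i)) ℝ)
        (U : Matrix (Fin (k (d + 1))) (Fin (k (d + 1))) ℂ)
        (hk : 2 ≤ k 0) (hmono : ∀ i, i ≤ d + 1 → k 0 ≤ k i) (hU : Uᴴ * U = 1)
        (Ω : Type) [MeasurableSpace Ω] (μ : Measure Ω), IsProbabilityMeasure μ →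
        ∀ (Wd : Ω → Matrix (Fin (k (d + 1))) (Fin (k d)) ℝ),
          Measurable (fun ω => fun p : Fin (k (d + 1)) × Fin (k d) => Wd ω p.1 p.2) →
          Measure.map (fun ω => fun p : Fin (k (d + 1)) × Fin (k d) => Wd ω p.1 p.2) μ =
            Measure.pi (fun _ : Fin (k (d + 1)) × Fin (k d) => gaussianReal 0 1) →
          ∀ γ : ℝ, 0 ≤ γ →
            ENNReal.ofReal (1 - 2 * Real.exp (-γ ^ 2)) ≤
              μ {ω | Coherent U
                {u | ∃ x y, u = Matrix.mulVec (Wd ω) (hid k W d x) -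
                    Matrix.mulVec (Wd ω) (hid k W d y)}
                (C * (Real.sqrt ((k 0 : ℝ) / (k (d + 1))) +
                  Real.sqrt (Real.log (k (d + 1)) / (k (d + 1))) +
                  Real.sqrt ((k 0 : ℝ) / (k (d + 1)) *
                    ∑ i ∈ Finset.range d,
                      Real.log (2 * Real.exp 1 * (k (i + 1)) / (k 0))) +
                  γ / Real.sqrt (k (d + 1))))} := by
  classical
  refine ⟨16, by norm_num, ?_⟩
  intro d k W U hk hmono hU Ω _ μ _ Wd hWd hlaw γ hγ
  have hp0 : 0 < k 0 := by omega
  have hpn : k 0 ≤ k (d + 1) := hmono (d + 1) le_rfl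
  have hn0 : (0 : ℝ) < k (d + 1) := by exact_mod_cast hp0.trans_le hpn
  have hp0' : (0 : ℝ) < k 0 := by exact_mod_cast hp0
  set S : ℝ := ∑ i ∈ Finset.range d, Real.log (2 * Real.exp 1 * (k (i + 1)) / k 0) with hS
  have hki : ∀ i ∈ Finset.range d, (1 : ℝ) ≤ 2 * Real.exp 1 * (k (i + 1)) / k 0 := by
    intro i hi
    have h1 : (k 0 : ℝ) ≤ k (i + 1) := by
      exact_mod_cast hmono (i + 1) (by have := Finset.mem_range.1 hi; omega)
    have h2 : (1 : ℝ) ≤ Real.exp 1 := Real.one_le_exp zero_le_one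
    rw [le_div_iff₀ hp0']
    nlinarith
  have hS0 : 0 ≤ S := Finset.sum_nonneg fun i hi => Real.log_nonneg (hki i hi)
  have hlog0 : 0 ≤ Real.log (k (d + 1)) := Real.log_natCast_nonneg (k (d + 1))
  obtain ⟨F, hFcard, hF⟩ := exists_finset_linearMap_hid k W hp0 d fun i hi => hmono i (by omega)
  have hFexp : (F.card : ℝ) ≤ Real.exp (k 0 * S) := by
    refine hFcard.trans_eq ?_
    rw [hS, Finset.mul_sum, Real.exp_sum]
    refine Finset.prod_congr rfl fun i hi => ?_
    rw [Real.exp_nat_mul, Real.exp_log (zero_lt_one.trans_le (hki i hi))]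
  set s : ℝ := 4 * √(k 0 / k (d + 1) + Real.log (k (d + 1)) / k (d + 1) +
    2 * (k 0 / k (d + 1) * S) + (γ / √(k (d + 1))) ^ 2) with hs
  have hs0 : 0 ≤ s := by positivity
  have hs2 : s ^ 2 * k (d + 1) / 16 = k 0 + Real.log (k (d + 1)) + 2 * k 0 * S + γ ^ 2 := by
    rw [hs, mul_pow, Real.sq_sqrt (by positivity), div_pow, Real.sq_sqrt hn0.le]
    field_simp
    ring
  have hdim : s < 1 → 2 * (2 * k 0) ≤ k (d + 1) := by
    intro h1
    have h2 : s ^ 2 < 1 := by nlinarith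
    have h3 : (k 0 : ℝ) ≤ s ^ 2 * k (d + 1) / 16 := by
      rw [hs2]; nlinarith [mul_nonneg hp0'.le hS0, sq_nonneg γ]
    have h4 : (2 * (2 * k 0) : ℝ) ≤ k (d + 1) := by nlinarith
    exact_mod_cast h4
  let T : ((Fin (k 0) → ℝ) →ₗ[ℝ] (Fin (k d) → ℝ)) × ((Fin (k 0) → ℝ) →ₗ[ℝ] (Fin (k d) → ℝ)) →
      Submodule ℝ (Fin (k d) → ℝ) := fun L => LinearMap.range (L.1.coprod L.2)
  have hT : ∀ V ∈ (F ×ˢ F).image T, Module.finrank ℝ V ≤ 2 * k 0 := by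
    intro V hV
    obtain ⟨L, -, rfl⟩ := Finset.mem_image.1 hV
    refine (LinearMap.finrank_range_le _).trans ?_
    simp [two_mul]
  have hTcard : (((F ×ˢ F).image T).card : ℝ) ≤ Real.exp (k 0 * S) * Real.exp (k 0 * S) := by
    have h : (((F ×ˢ F).image T).card : ℝ) ≤ F.card * F.card := by
      exact_mod_cast Finset.card_image_le.trans_eq (Finset.card_product F F)
    exact h.trans (mul_le_mul hFexp hFexp (by positivity) (by positivity))
  let B : Set (PiLp 2 fun _ : Fin (k d) => EuclideanSpace ℝ (Fin (k (d + 1)))) :=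
    ⋃ r ∈ (F ×ˢ F).image T ×ˢ (Finset.univ : Finset (Fin (k (d + 1)) × Bool)),
      correlatedSet r.1 s (rowPart U r.2)
  have hBmeas : MeasurableSet B :=
    (isOpen_biUnion fun r _ => isOpen_correlatedSet _ _ _).measurableSet
  have hBbound : stdGaussian (PiLp 2 fun _ : Fin (k d) => EuclideanSpace ℝ (Fin (k (d + 1)))) B ≤
      ENNReal.ofReal (2 * Real.exp (-γ ^ 2)) := by
    refine (stdGaussian_biUnion_correlatedSet_le U _ hs0 hT hdim).trans
      (ENNReal.ofReal_le_ofReal ?_)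
    rw [hs2]
    calc _ ≤ Real.exp (k 0 * S) * Real.exp (k 0 * S) * (Real.exp (Real.log (k (d + 1))) * 2) *
          Real.exp (((2 * k 0 : ℕ) : ℝ) / 2 - (k 0 + Real.log (k (d + 1)) + 2 * k 0 * S + γ ^ 2)) := by
          rw [Real.exp_log hn0]
          gcongr
      _ = 2 * (Real.exp (k 0 * S) * Real.exp (k 0 * S) * Real.exp (Real.log (k (d + 1))) *
          Real.exp (((2 * k 0 : ℕ) : ℝ) / 2 - (k 0 + Real.log (k (d + 1)) + 2 * k 0 * S + γ ^ 2))) := by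
        ring
      _ = _ := by
          rw [← Real.exp_add, ← Real.exp_add, ← Real.exp_add]
          congr 2
          push_cast
          ring
  set Y : Ω → PiLp 2 fun _ : Fin (k d) => EuclideanSpace ℝ (Fin (k (d + 1))) :=
    fun ω => columns fun q => Wd ω q.1 q.2 with hY
  have hYmeas : Measurable Y := measurable_columns.comp hWd
  have hYlaw : μ.map Y = stdGaussian _ := by
    rw [← map_columns_pi_gaussianReal, ← hlaw, Measure.map_map measurable_columns hWd]
    rfl
  have hbad : μ (Y ⁻¹' B) ≤ ENNReal.ofReal (2 * Real.exp (-γ ^ 2)) := by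
    rw [← Measure.map_apply hYmeas hBmeas, hYlaw]
    exact hBbound
  calc ENNReal.ofReal (1 - 2 * Real.exp (-γ ^ 2)) ≤ 1 - μ (Y ⁻¹' B) := by
        rw [ENNReal.ofReal_sub _ (by positivity), ENNReal.ofReal_one]
        exact tsub_le_tsub_left hbad 1
    _ = μ (Y ⁻¹' B)ᶜ := (prob_compl_eq_one_sub (hYmeas hBmeas)).symm
    _ ≤ _ := by
        refine measure_mono fun ω hω => ?_
        rintro u ⟨x, y, rfl⟩ hu
        obtain ⟨L₁, hL₁, hx⟩ := hF x
        obtain ⟨L₂, hL₂, hy⟩ := hF y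
        rw [hx, hy, ← Matrix.mulVec_sub] at hu ⊢
        have hmem : L₁ x - L₂ y ∈ T (L₁, L₂) := ⟨(x, -y), by simp [sub_eq_add_neg]⟩
        refine (mNorm_mulVec_le hU (Wd ω) (T (L₁, L₂)) hs0 (fun q hq => hω ?_) hmem hu).trans ?_
        · exact Set.mem_biUnion (x := (T (L₁, L₂), q)) (Finset.mem_coe.2 (Finset.mem_product.2
            ⟨Finset.mem_image_of_mem T (Finset.mem_product.2 ⟨hL₁, hL₂⟩),
              Finset.mem_univ q⟩)) hq
        · have := sqrt_sum_le_sum_sqrt (a := k 0 / k (d + 1))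
            (b := Real.log (k (d + 1)) / k (d + 1)) (c := k 0 / k (d + 1) * S) (e := γ / √(k (d + 1)))
            (by positivity) (by positivity) (by positivity) (by positivity)
          linarith
end

section
/- Let 1 ≤ k ≤ n and let A ∈ ℝ^{n×k} be a random matrix with i.i.d. standard Gaussian entries A_{ij} ~ N(0,1). Then there is an absolute constant C > 0 such that for every γ ≥ 0, with probability at least 1 − 2·exp(−γ²), sup{ ‖v‖_∞ : v ∈ range(A), ‖v‖₂ = 1 } ≤ C·( √(k/n) + √(log(n)/n) + γ/√n ). -/
open MeasureTheory ProbabilityTheory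

/-- The ℓ^∞ norm of a finite real vector. -/
noncomputable def linfR {n : ℕ} (x : Fin n → ℝ) : ℝ := ⨆ i, |x i|

section ChiSquare

variable {ι : Type*} [Fintype ι]

lemma exp_mul_sq_mul_gaussianPDFReal (t x : ℝ) :
    gaussianPDFReal 0 1 x * Real.exp (t * x ^ 2) =
      (√(2 * Real.pi))⁻¹ * Real.exp (-((1 - 2 * t) / 2) * x ^ 2) := by
  rw [gaussianPDFReal, mul_assoc, ← Real.exp_add]
  simp only [NNReal.coe_one, mul_one, sub_zero]
  congr 2
  ring

lemma integrable_exp_mul_sq_gaussianReal {t : ℝ} (ht : t < 1 / 2) :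
    Integrable (fun x : ℝ ↦ Real.exp (t * x ^ 2)) (gaussianReal 0 1) := by
  rw [gaussianReal_of_var_ne_zero _ one_ne_zero,
    integrable_withDensity_iff_integrable_smul' (measurable_gaussianPDF _ _)
      (ae_of_all _ fun _ ↦ gaussianPDF_lt_top)]
  simp_rw [toReal_gaussianPDF, smul_eq_mul, exp_mul_sq_mul_gaussianPDFReal]
  exact (integrable_exp_neg_mul_sq (by linarith)).const_mul _

lemma integral_exp_mul_sq_gaussianReal {t : ℝ} (ht : t < 1 / 2) :
    ∫ x, Real.exp (t * x ^ 2) ∂(gaussianReal 0 1) = √(1 / (1 - 2 * t)) := by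
  rw [integral_gaussianReal_eq_integral_smul one_ne_zero]
  simp_rw [smul_eq_mul, exp_mul_sq_mul_gaussianPDFReal]
  rw [integral_const_mul, integral_gaussian, ← Real.sqrt_inv, ← Real.sqrt_mul (by positivity)]
  congr 1
  have : 1 - 2 * t ≠ 0 := by linarith
  field_simp

lemma exp_mul_sum_sq_eq_prod [DecidableEq ι] (S : Finset ι) (t : ℝ) (x : ι → ℝ) :
    Real.exp (t * ∑ i ∈ S, x i ^ 2) = ∏ i, if i ∈ S then Real.exp (t * x i ^ 2) else 1 := by
  rw [Finset.mul_sum, Real.exp_sum, Finset.prod_ite_mem, Finset.univ_inter]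

lemma integrable_exp_mul_sum_sq (S : Finset ι) {t : ℝ} (ht : t < 1 / 2) :
    Integrable (fun x : ι → ℝ ↦ Real.exp (t * ∑ i ∈ S, x i ^ 2))
      (Measure.pi fun _ ↦ gaussianReal 0 1) := by
  classical
  simp_rw [exp_mul_sum_sq_eq_prod]
  refine Integrable.fintype_prod
    (f := fun i (y : ℝ) ↦ if i ∈ S then Real.exp (t * y ^ 2) else 1) fun i ↦ ?_
  by_cases hi : i ∈ S
  · simpa [hi] using integrable_exp_mul_sq_gaussianReal ht
  · simp [hi]

lemma mgf_sum_sq (S : Finset ι) {t : ℝ} (ht : t < 1 / 2) :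
    mgf (fun x : ι → ℝ ↦ ∑ i ∈ S, x i ^ 2) (Measure.pi fun _ ↦ gaussianReal 0 1) t =
      √(1 / (1 - 2 * t)) ^ S.card := by
  classical
  simp_rw [mgf, exp_mul_sum_sq_eq_prod]
  rw [integral_fintype_prod_eq_prod
    (f := fun i (y : ℝ) ↦ if i ∈ S then Real.exp (t * y ^ 2) else 1)]
  have h (i : ι) : ∫ y : ℝ, (if i ∈ S then Real.exp (t * y ^ 2) else 1) ∂(gaussianReal 0 1) =
      if i ∈ S then √(1 / (1 - 2 * t)) else 1 := by
    by_cases hi : i ∈ S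
    · simpa [hi] using integral_exp_mul_sq_gaussianReal ht
    · simp [hi]
  simp_rw [h]
  rw [Finset.prod_ite_mem, Finset.univ_inter, Finset.prod_const]

end ChiSquare

section StdGaussian

variable {E : Type*} [NormedAddCommGroup E] [InnerProductSpace ℝ E] [FiniteDimensional ℝ E]

lemma exists_orthonormalBasis_inner_sq_le (W : Submodule ℝ E) :
    ∃ (b : OrthonormalBasis (Fin (Module.finrank ℝ W) ⊕
        Fin (Module.finrank ℝ E - Module.finrank ℝ W)) ℝ E),
      ∀ w ∈ W, ∀ g, inner ℝ w g ^ 2 ≤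
        ‖w‖ ^ 2 * ∑ i ∈ Finset.univ.map Function.Embedding.inl, inner ℝ (b i) g ^ 2 := by
  set c := stdOrthonormalBasis ℝ W
  have hcard : Module.finrank ℝ E = Fintype.card (Fin (Module.finrank ℝ W) ⊕
      Fin (Module.finrank ℝ E - Module.finrank ℝ W)) := by
    simp [Nat.add_sub_of_le W.finrank_le]
  obtain ⟨b, hb⟩ := Orthonormal.exists_orthonormalBasis_extension_of_card_eq hcard
    (v := Sum.elim (fun i ↦ (c i : E)) 0) (s := Set.range Sum.inl) (by
      have hc : Orthonormal ℝ fun i ↦ (c i : E) := c.orthonormal.comp_linearIsometry W.subtypeₗᵢ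
      let e := Equiv.ofInjective (Sum.inl : Fin (Module.finrank ℝ W) → Fin (Module.finrank ℝ W) ⊕
        Fin (Module.finrank ℝ E - Module.finrank ℝ W)) Sum.inl_injective
      convert hc.comp e.symm e.symm.injective using 1
      ext1 p
      obtain ⟨i, rfl⟩ := e.surjective p
      simp [e, Set.domRestrict])
  refine ⟨b, fun w hw g ↦ ?_⟩
  have hb' (i) : b (Sum.inl i) = c i := hb _ ⟨i, rfl⟩
  have hw' : w = ∑ i, inner ℝ (c i) (⟨w, hw⟩ : W) • (c i : E) := by
    have := congrArg (W.subtype) (c.sum_repr' ⟨w, hw⟩)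
    simpa using this.symm
  have hnorm : ‖w‖ ^ 2 = ∑ i, inner ℝ (c i) (⟨w, hw⟩ : W) ^ 2 := by
    rw [c.sum_sq_inner_right]; rfl
  rw [Finset.sum_map, hnorm]
  conv_lhs => rw [hw', sum_inner]
  simp_rw [real_inner_smul_left, Function.Embedding.inl_apply, hb']
  exact Finset.sum_mul_sq_le_sq_mul_sq _ _ _

variable [MeasurableSpace E] [BorelSpace E]

lemma stdGaussian_sum_inner_sq_ge_le {ι : Type*} [Fintype ι] (b : OrthonormalBasis ι ℝ E)
    (S : Finset ι) (s : ℝ) :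
    stdGaussian E {g | s ≤ ∑ i ∈ S, inner ℝ (b i) g ^ 2} ≤
      ENNReal.ofReal (Real.exp (-s / 4) * √2 ^ S.card) := by
  classical
  rw [stdGaussian_eq_map_pi_orthonormalBasis b, Measure.map_apply (by fun_prop)
    (measurableSet_le (by fun_prop) (by fun_prop))]
  have h := measure_ge_le_exp_mul_mgf (μ := Measure.pi fun _ : ι ↦ gaussianReal 0 1)
    (X := fun x ↦ ∑ i ∈ S, x i ^ 2) (t := 1 / 4) s (by norm_num)
    (integrable_exp_mul_sum_sq S (by norm_num))
  rw [mgf_sum_sq S (by norm_num)] at h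
  refine ENNReal.le_ofReal_iff_toReal_le (measure_ne_top _ _) (by positivity) |>.2 ?_
  convert h using 1
  · rw [Measure.real]
    congr 2
    ext x
    simp [b.orthonormal.inner_right_fintype]
  · norm_num
    ring_nf

lemma stdGaussian_norm_sq_le_le :
    stdGaussian E {g | ‖g‖ ^ 2 ≤ Module.finrank ℝ E / 4} ≤
      ENNReal.ofReal (Real.exp (-Module.finrank ℝ E / 4)) := by
  set b := stdOrthonormalBasis ℝ E
  set n := Module.finrank ℝ E
  have h := measure_le_le_exp_mul_mgf (μ := Measure.pi fun _ : Fin n ↦ gaussianReal 0 1)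
    (X := fun x ↦ ∑ i, x i ^ 2) (t := -1) (n / 4) (by norm_num)
    (integrable_exp_mul_sum_sq _ (by norm_num))
  rw [mgf_sum_sq _ (by norm_num)] at h
  rw [stdGaussian_eq_map_pi_orthonormalBasis b, Measure.map_apply (by fun_prop)
    (measurableSet_le (by fun_prop) (by fun_prop))]
  refine ENNReal.le_ofReal_iff_toReal_le (measure_ne_top _ _) (by positivity) |>.2 ?_
  have hsqrt : √(1 / (1 - 2 * (-1 : ℝ))) ≤ Real.exp (-1 / 2) := by
    refine Real.sqrt_le_iff.2 ⟨by positivity, ?_⟩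
    rw [← Real.exp_nat_mul, show ((2 : ℕ) : ℝ) * (-1 / 2) = -1 by norm_num, Real.exp_neg,
      one_div]
    exact inv_anti₀ (by positivity) (by linarith [Real.exp_one_lt_d9])
  calc _ = (Measure.pi fun _ : Fin n ↦ gaussianReal 0 1).real
        {x | ∑ i, x i ^ 2 ≤ (n : ℝ) / 4} := by
        rw [Measure.real]
        congr 2
        ext x
        simp [← b.sum_sq_inner_right, b.orthonormal.inner_right_fintype]
    _ ≤ _ := h
    _ ≤ Real.exp (-(-1) * (n / 4)) * Real.exp (-1 / 2) ^ n := by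
        rw [Finset.card_univ, Fintype.card_fin]
        gcongr
    _ = Real.exp (-n / 4) := by
        rw [← Real.exp_nat_mul, ← Real.exp_add]
        ring_nf

lemma stdGaussian_exists_mem_inner_sq_gt_le (W : Submodule ℝ E) {k : ℕ}
    (hk : Module.finrank ℝ W ≤ k) (s : ℝ) :
    stdGaussian E {g | ∃ w ∈ W, s * ‖w‖ ^ 2 < inner ℝ w g ^ 2} ≤
      ENNReal.ofReal (Real.exp (-s / 4) * √2 ^ k) := by
  obtain ⟨b, hb⟩ := exists_orthonormalBasis_inner_sq_le W
  refine (measure_mono ?_).trans ((stdGaussian_sum_inner_sq_ge_le b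
    (Finset.univ.map Function.Embedding.inl) s).trans ?_)
  · rintro g ⟨w, hw, h⟩
    by_contra! hlt
    rw [Set.mem_ofPred_eq, not_le] at hlt
    have := hb w hw g
    nlinarith [sq_nonneg ‖w‖]
  · have : (1 : ℝ) ≤ √2 := Real.one_le_sqrt.2 one_le_two
    simp only [Finset.card_map, Finset.card_univ, Fintype.card_fin]
    gcongr

end StdGaussian

section RandomSubspace

variable {E : Type*} [NormedAddCommGroup E] [InnerProductSpace ℝ E]
  {κ : Type*} [Fintype κ]

/-- The tuples of vectors `M` whose linear combinations `w` all satisfy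
`⟪w, x⟫ ^ 2 ≤ s * ‖w‖ ^ 2`. -/
def coherentTuples (s : ℝ) (x : E) : Set (PiLp 2 fun _ : κ ↦ E) :=
  {M | ∀ y : κ → ℝ, inner ℝ (∑ j, y j • M j) x ^ 2 ≤ s * ‖∑ j, y j • M j‖ ^ 2}

lemma isClosed_setOf_mem_coherentTuples (s : ℝ) :
    IsClosed {p : (PiLp 2 fun _ : κ ↦ E) × E | p.1 ∈ coherentTuples s p.2} := by
  have : {p : (PiLp 2 fun _ : κ ↦ E) × E | p.1 ∈ coherentTuples s p.2} = ⋂ y : κ → ℝ,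
      {p | inner ℝ (∑ j, y j • p.1 j) p.2 ^ 2 ≤ s * ‖∑ j, y j • p.1 j‖ ^ 2} := by
    ext p
    simp [coherentTuples]
  rw [this]
  exact isClosed_iInter fun y ↦ isClosed_le (by fun_prop) (by fun_prop)

lemma isClosed_coherentTuples (s : ℝ) (x : E) :
    IsClosed (coherentTuples s x : Set (PiLp 2 fun _ : κ ↦ E)) :=
  (isClosed_setOf_mem_coherentTuples s).preimage (Continuous.prodMk_left x)

lemma smul_mem_coherentTuples {s r : ℝ} {x : E} {M : PiLp 2 fun _ : κ ↦ E}
    (h : M ∈ coherentTuples s x) : M ∈ coherentTuples (r ^ 2 * s) (r • x) := fun y ↦ by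
  rw [real_inner_smul_right, mul_pow, mul_assoc]
  exact mul_le_mul_of_nonneg_left (h y) (sq_nonneg r)

variable [FiniteDimensional ℝ E] [MeasurableSpace E] [BorelSpace E]

lemma stdGaussian_coherentTuples_eq (s : ℝ) {u v : E} (h : ‖u‖ = ‖v‖) :
    stdGaussian (PiLp 2 fun _ : κ ↦ E) (coherentTuples s u)ᶜ =
      stdGaussian (PiLp 2 fun _ : κ ↦ E) (coherentTuples s v)ᶜ := by
  obtain ⟨U, rfl⟩ : ∃ U : E ≃ₗᵢ[ℝ] E, U u = v := ⟨_, Submodule.reflection_sub h⟩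
  conv_rhs => rw [← stdGaussian_map (LinearIsometryEquiv.piLpCongrRight 2 fun _ : κ ↦ U),
    Measure.map_apply (by fun_prop) (isClosed_coherentTuples _ _).measurableSet.compl]
  congr 1
  ext M
  simp only [coherentTuples, Set.mem_compl_iff, Set.mem_ofPred_eq, Set.preimage_compl,
    Set.mem_preimage, LinearIsometryEquiv.piLpCongrRight_apply, ← map_smul, ← map_sum,
    LinearIsometryEquiv.inner_map_map, LinearIsometryEquiv.norm_map]

lemma stdGaussian_compl_coherentTuples_le {s : ℝ} (hs : 0 ≤ s) {u : E} (hu : ‖u‖ = 1) :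
    stdGaussian (PiLp 2 fun _ : κ ↦ E) (coherentTuples s u)ᶜ ≤
      ENNReal.ofReal (Real.exp (-Module.finrank ℝ E / 4)) +
      ENNReal.ofReal (Real.exp (-(s * (Module.finrank ℝ E / 4)) / 4) * √2 ^ Fintype.card κ) := by
  set n : ℝ := (Module.finrank ℝ E : ℝ) with hn
  set P := stdGaussian (PiLp 2 fun _ : κ ↦ E)
  have hn0 : 0 ≤ n := Nat.cast_nonneg _
  let T : Set ((PiLp 2 fun _ : κ ↦ E) × E) :=
    {p | ‖p.2‖ ^ 2 ≤ n / 4} ∪ {p | p.1 ∈ coherentTuples (s * (n / 4)) p.2}ᶜ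
  have hT : MeasurableSet T :=
    (isClosed_le (by fun_prop) (by fun_prop)).measurableSet.union
      (isClosed_setOf_mem_coherentTuples _).measurableSet.compl
  have hslice (g : E) : P (coherentTuples s u)ᶜ ≤ P ((fun M ↦ (M, g)) ⁻¹' T) := by
    by_cases hg : ‖g‖ ^ 2 ≤ n / 4
    · have : (fun M : PiLp 2 fun _ : κ ↦ E ↦ (M, g)) ⁻¹' T = Set.univ :=
        Set.eq_univ_of_forall fun _ ↦ Or.inl hg
      rw [this]
      exact measure_mono (Set.subset_univ _)
    · push Not at hg
      have hg0 : ‖g‖ ≠ 0 := fun h ↦ by simp [h] at hg; linarith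
      rw [stdGaussian_coherentTuples_eq s (u := u) (v := ‖g‖⁻¹ • g)
        (by simp [norm_smul, hu, hg0])]
      refine measure_mono fun M hM ↦ Or.inr fun h ↦ hM fun y ↦ ?_
      refine (smul_mem_coherentTuples (r := ‖g‖⁻¹) h y).trans ?_
      gcongr
      rw [inv_pow, inv_mul_le_iff₀ (by positivity), mul_comm]
      gcongr
  calc P (coherentTuples s u)ᶜ = ∫⁻ _, P (coherentTuples s u)ᶜ ∂(stdGaussian E) := by simp
    _ ≤ ∫⁻ g, P ((fun M ↦ (M, g)) ⁻¹' T) ∂(stdGaussian E) := lintegral_mono hslice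
    _ = ∫⁻ M, stdGaussian E (Prod.mk M ⁻¹' T) ∂P := by
      rw [← Measure.prod_apply_symm hT, Measure.prod_apply hT]
    _ ≤ ∫⁻ _, (ENNReal.ofReal (Real.exp (-n / 4)) +
          ENNReal.ofReal (Real.exp (-(s * (n / 4)) / 4) * √2 ^ Fintype.card κ)) ∂P := by
      refine lintegral_mono fun M ↦ (measure_union_le _ _).trans ?_
      refine add_le_add stdGaussian_norm_sq_le_le ?_
      let L : (κ → ℝ) →ₗ[ℝ] E := Fintype.linearCombination ℝ M
      have hL : Module.finrank ℝ (LinearMap.range L) ≤ Fintype.card κ := by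
        simpa using LinearMap.finrank_range_le L
      refine (measure_mono ?_).trans (stdGaussian_exists_mem_inner_sq_gt_le _ hL _)
      intro g hg
      obtain ⟨y, hy⟩ := not_forall.1 (show ¬ ∀ y : κ → ℝ, inner ℝ (L y) g ^ 2 ≤
        s * (n / 4) * ‖L y‖ ^ 2 from hg)
      exact ⟨L y, ⟨y, rfl⟩, not_le.1 hy⟩
    _ = _ := by simp

end RandomSubspace

lemma map_pi_eq_stdGaussian_columns (ι κ : Type*) [Fintype ι] [Fintype κ] :
    (Measure.pi fun _ : ι × κ ↦ gaussianReal 0 1).map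
      (fun x ↦ WithLp.toLp 2 fun j ↦ WithLp.toLp 2 fun i ↦ x (i, j)) =
      stdGaussian (PiLp 2 fun _ : κ ↦ EuclideanSpace ℝ ι) := by
  let b := (Pi.orthonormalBasis fun _ : κ ↦ EuclideanSpace.basisFun ι ℝ).reindex
    ((Equiv.sigmaEquivProd κ ι).trans (Equiv.prodComm κ ι))
  rw [stdGaussian_eq_map_pi_orthonormalBasis b]
  congr 1
  ext1 x
  rw [← b.sum_repr (WithLp.toLp 2 fun j ↦ WithLp.toLp 2 fun i ↦ x (i, j))]
  rfl

lemma inner_sum_columns_single {ι κ : Type*} [Fintype ι] [DecidableEq ι] [Fintype κ]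
    (A : Matrix ι κ ℝ) (y : κ → ℝ) (i : ι) :
    inner ℝ (∑ j, y j • WithLp.toLp 2 fun i ↦ A i j) (EuclideanSpace.single i (1 : ℝ)) =
      A.mulVec y i := by
  simp [EuclideanSpace.inner_single_right, Matrix.mulVec, dotProduct, mul_comm]

lemma norm_sum_columns_sq {ι κ : Type*} [Fintype ι] [Fintype κ] (A : Matrix ι κ ℝ) (y : κ → ℝ) :
    ‖∑ j, y j • (WithLp.toLp 2 fun i ↦ A i j : EuclideanSpace ℝ ι)‖ ^ 2 =
      ∑ i, A.mulVec y i ^ 2 := by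
  simp [EuclideanSpace.real_norm_sq_eq, Matrix.mulVec, dotProduct, mul_comm]

lemma abs_le_l2R {n : ℕ} (v : Fin n → ℝ) (i : Fin n) : |v i| ≤ l2R v :=
  Real.abs_le_sqrt (Finset.single_le_sum (f := fun i ↦ v i ^ 2) (fun _ _ ↦ sq_nonneg _)
    (Finset.mem_univ i))

lemma linfR_le_of_forall {n : ℕ} [NeZero n] {v : Fin n → ℝ} {t : ℝ} (h : ∀ i, |v i| ≤ t) :
    linfR v ≤ t :=
  ciSup_le h

/-- The union bound over the coordinates of the coherence tail, for `n t ^ 2` large compared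
with `k + log n + γ ^ 2`. -/
lemma natCast_mul_exp_add_exp_le {n k : ℕ} (hn : 0 < n) {t γ : ℝ} (ht1 : t ^ 2 ≤ 1)
    (ht : 16 * (k + Real.log n + γ ^ 2) ≤ n * t ^ 2) :
    n * (Real.exp (-n / 4) + Real.exp (-(t ^ 2 * (n / 4)) / 4) * √2 ^ k) ≤
      2 * Real.exp (-γ ^ 2) := by
  have hn' : (0 : ℝ) < n := by positivity
  have hlog : 0 ≤ Real.log n := Real.log_natCast_nonneg n
  have hk : (0 : ℝ) ≤ k := k.cast_nonneg
  have hsqrt : √2 ≤ Real.exp 1 := by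
    refine Real.sqrt_le_iff.2 ⟨by positivity, ?_⟩
    nlinarith [Real.add_one_le_exp (1 : ℝ)]
  have hpow : √2 ^ k ≤ Real.exp k := by
    calc √2 ^ k ≤ Real.exp 1 ^ k := by gcongr
      _ = Real.exp k := by rw [← Real.exp_nat_mul, mul_one]
  have h1 : n * Real.exp (-n / 4) ≤ Real.exp (-γ ^ 2) := by
    conv_lhs => enter [1]; rw [← Real.exp_log hn']
    rw [← Real.exp_add]
    exact Real.exp_le_exp.2 (by nlinarith [sq_nonneg γ])
  have h2 : n * (Real.exp (-(t ^ 2 * (n / 4)) / 4) * √2 ^ k) ≤ Real.exp (-γ ^ 2) := by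
    calc n * (Real.exp (-(t ^ 2 * (n / 4)) / 4) * √2 ^ k)
        ≤ Real.exp (Real.log n) * (Real.exp (-(t ^ 2 * (n / 4)) / 4) * Real.exp k) := by
          rw [Real.exp_log hn']
          gcongr
      _ ≤ Real.exp (-γ ^ 2) := by
          rw [← Real.exp_add, ← Real.exp_add]
          exact Real.exp_le_exp.2 (by linarith)
  linarith

lemma sum_le_mul_sq_sqrt_div_add {n k l γ : ℝ} (hn : 0 < n) (hk : 0 ≤ k) (hl : 0 ≤ l)
    (hγ : 0 ≤ γ) : k + l + γ ^ 2 ≤ n * (√(k / n) + √(l / n) + γ / √n) ^ 2 := by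
  have h1 : n * √(k / n) ^ 2 = k := by rw [Real.sq_sqrt (by positivity)]; field_simp
  have h2 : n * √(l / n) ^ 2 = l := by rw [Real.sq_sqrt (by positivity)]; field_simp
  have h3 : n * (γ / √n) ^ 2 = γ ^ 2 := by rw [div_pow, Real.sq_sqrt hn.le]; field_simp
  calc k + l + γ ^ 2 = n * (√(k / n) ^ 2 + √(l / n) ^ 2 + (γ / √n) ^ 2) := by
        rw [mul_add, mul_add, h1, h2, h3]
    _ ≤ _ := by
      gcongr
      have : 0 ≤ √(k / n) * √(l / n) + √(k / n) * (γ / √n) + √(l / n) * (γ / √n) := by positivity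
      nlinarith

/-- coherence of a uniformly random subspace.  There is an absolute
constant `C > 0` such that for an `n×k` matrix `A` with i.i.d. `N(0,1)` entries
(whose column space is a uniformly random `k`-dimensional subspace) and every
`γ ≥ 0`, with probability at least `1 − 2·exp(−γ²)`, every unit vector `v` in the
column space of `A` satisfies `‖v‖_∞ ≤ C·(√(k/n) + √(log(n)/n) + γ/√n)`. -/
theorem gaussian_column_space_coherence_bound :
    ∃ C : ℝ, 0 < C ∧
      ∀ (n k : ℕ), 1 ≤ k → k ≤ n →
        ∀ (Ω : Type) [MeasurableSpace Ω] (μ : Measure Ω), IsProbabilityMeasure μ →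
          ∀ (A : Ω → Matrix (Fin n) (Fin k) ℝ),
            Measurable (fun ω => fun p : Fin n × Fin k => A ω p.1 p.2) →
            Measure.map (fun ω => fun p : Fin n × Fin k => A ω p.1 p.2) μ =
              Measure.pi (fun _ : Fin n × Fin k => gaussianReal 0 1) →
            ∀ γ : ℝ, 0 ≤ γ →
              ENNReal.ofReal (1 - 2 * Real.exp (-γ ^ 2)) ≤
                μ {ω | ∀ v : Fin n → ℝ, (∃ y, v = (A ω).mulVec y) → l2R v = 1 →
                  linfR v ≤ C * (Real.sqrt ((k : ℝ) / n) +
                    Real.sqrt (Real.log n / n) + γ / Real.sqrt n)} := by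
  refine ⟨4, by norm_num, fun n k hk hkn Ω _ μ _ A hA hlaw γ hγ ↦ ?_⟩
  have hn : 0 < n := by omega
  have : NeZero n := ⟨hn.ne'⟩
  set t : ℝ := 4 * (√((k : ℝ) / n) + √(Real.log n / n) + γ / √n) with ht
  have ht0 : 0 ≤ t := by positivity
  rcases le_or_gt 1 t with h1 | h1
  · have huniv : {ω | ∀ v : Fin n → ℝ, (∃ y, v = (A ω).mulVec y) → l2R v = 1 → linfR v ≤ t} =
        Set.univ :=
      Set.eq_univ_of_forall fun ω v _ hv ↦
        linfR_le_of_forall fun i ↦ (abs_le_l2R v i).trans (hv.trans_le h1)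
    rw [huniv, measure_univ]
    exact ENNReal.ofReal_le_one.2 (by linarith [Real.exp_pos (-γ ^ 2)])
  let M : Ω → PiLp 2 fun _ : Fin k ↦ EuclideanSpace ℝ (Fin n) :=
    fun ω ↦ WithLp.toLp 2 fun j ↦ WithLp.toLp 2 fun i ↦ A ω i j
  let Φ : (Fin n × Fin k → ℝ) → PiLp 2 fun _ : Fin k ↦ EuclideanSpace ℝ (Fin n) :=
    fun x ↦ WithLp.toLp 2 fun j ↦ WithLp.toLp 2 fun i ↦ x (i, j)
  have hΦ : Measurable Φ := by
    have : Continuous Φ := by fun_prop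
    exact this.measurable
  have hM : Measurable M := hΦ.comp hA
  have hMlaw : μ.map M = stdGaussian _ := by
    rw [← map_pi_eq_stdGaussian_columns, ← hlaw, Measure.map_map hΦ hA]
    rfl
  have hmeas (i : Fin n) : MeasurableSet (coherentTuples (t ^ 2) (EuclideanSpace.single i (1 : ℝ)) :
      Set (PiLp 2 fun _ : Fin k ↦ EuclideanSpace ℝ (Fin n))) :=
    (isClosed_coherentTuples _ _).measurableSet
  let G : Set Ω := ⋂ i, M ⁻¹' coherentTuples (t ^ 2) (EuclideanSpace.single i (1 : ℝ))
  have hG : MeasurableSet G := MeasurableSet.iInter fun i ↦ hM (hmeas i)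
  have hGsub : G ⊆
      {ω | ∀ v : Fin n → ℝ, (∃ y, v = (A ω).mulVec y) → l2R v = 1 → linfR v ≤ t} := by
    rintro ω hω v ⟨y, rfl⟩ hv
    refine linfR_le_of_forall fun i ↦ abs_le_of_sq_le_sq ?_ ht0
    have h := Set.mem_iInter.1 hω i y
    rw [inner_sum_columns_single, norm_sum_columns_sq, Real.sqrt_eq_one.1 hv, mul_one] at h
    exact h
  have hbad : μ Gᶜ ≤ ENNReal.ofReal (2 * Real.exp (-γ ^ 2)) := by
    rw [Set.compl_iInter]
    refine (measure_iUnion_fintype_le _ _).trans ?_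
    have hi (i : Fin n) : μ (M ⁻¹' coherentTuples (t ^ 2) (EuclideanSpace.single i (1 : ℝ)))ᶜ ≤
        ENNReal.ofReal (Real.exp (-n / 4) + Real.exp (-(t ^ 2 * (n / 4)) / 4) * √2 ^ k) := by
      rw [← Set.preimage_compl, ← Measure.map_apply hM (hmeas i).compl, hMlaw,
        ENNReal.ofReal_add (by positivity) (by positivity)]
      simpa using stdGaussian_compl_coherentTuples_le (κ := Fin k) (sq_nonneg t)
        (u := EuclideanSpace.single i (1 : ℝ)) (by simp)
    refine (Finset.sum_le_sum fun i _ ↦ hi i).trans ?_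
    rw [Finset.sum_const, Finset.card_univ, Fintype.card_fin, nsmul_eq_mul,
      ← ENNReal.ofReal_natCast, ← ENNReal.ofReal_mul (by positivity)]
    refine ENNReal.ofReal_le_ofReal (natCast_mul_exp_add_exp_le hn (by nlinarith) ?_)
    have := sum_le_mul_sq_sqrt_div_add (n := n) (k := k) (by positivity) (by positivity)
      (Real.log_natCast_nonneg n) hγ
    rw [ht, mul_pow]
    linarith
  refine le_trans ?_ (measure_mono hGsub)
  rw [ENNReal.ofReal_sub _ (by positivity), ENNReal.ofReal_one, tsub_le_iff_right]
  calc (1 : ENNReal) = μ G + μ Gᶜ := by rw [measure_add_measure_compl hG, measure_univ]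
    _ ≤ _ := by gcongr
end
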